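/- arXiv:2208.05633 — 3 statements merged into one kernel-verified Lean document; each statement's English description precedes it below -/
import Mathlib

section
/- Let M and M̂ be two linear episodic MDPs on (S, A) with common horizon H and common feature map φ : S×A → ℝ^d, with parameters (θ_{M,h}, μ_{M,h})_h and (θ̂_h, μ̂_h)_h respectively, and suppose each of M and M̂ has a unique optimal policy (for every h and s, both Q*_{M,h}(s,·) and Q*_{M̂,h}(s,·) have unique maximizers). Then |Δ(M̂) − Δ(M)| ≤ 2·Σ_{h=1}^H max_{(s,a)∈S×A} |φ(s,a)ᵀ(θ̂_h − θ_{M,h} + Σ_{s'∈S} (μ̂_h(s') − μ_{M,h}(s'))·V*_{M̂,h+1}(s'))|. -/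
open Matrix Finset

/-!
Write `Q̂_h - Q_h = δ_h + p_h (V̂_{h+1} - V_{h+1})`, where `δ_h` is the error made by applying the
Bellman operator of `M` instead of that of `M̂` to `V̂_{h+1}`. Averaging against `p_h` and
maximizing over actions are both 1-Lipschitz for the sup norm, so backward induction gives
`‖Q̂_h - Q_h‖ ≤ ∑_k ‖δ_k‖ =: E`. For linear models `δ_h` is the inner product with `φ`.

The gap is then 2-Lipschitz in `Q`, although the set of suboptimal actions also depends on `Q`. If
the action `a` attaining the gap of `Q` is optimal for `Q̂`, then the action `b` optimal for `Q` is
suboptimal for `Q̂`, by at most `Q̂(a) - Q̂(b) ≤ Q(a) - Q(b) + 2E ≤ 2E`.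
-/

lemma abs_sup'_sub_sup'_le {ι α : Type*} [AddCommGroup α] [LinearOrder α] [IsOrderedAddMonoid α]
    {s : Finset ι} (hs : s.Nonempty) {f g : ι → α} {c : α} (hfg : ∀ i ∈ s, |f i - g i| ≤ c) :
    |s.sup' hs f - s.sup' hs g| ≤ c := by
  rw [abs_sub_le_iff, sub_le_iff_le_add, sub_le_iff_le_add]
  constructor <;> refine sup'_le _ _ fun i hi => ?_
  · exact (sub_le_iff_le_add.1 (abs_sub_le_iff.1 (hfg i hi)).1).trans
      (add_le_add_right (le_sup' g hi) c)
  · exact (sub_le_iff_le_add.1 (abs_sub_le_iff.1 (hfg i hi)).2).trans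
      (add_le_add_right (le_sup' f hi) c)

lemma abs_sum_mul_le_of_sum_abs_le_one {ι R : Type*} [CommRing R] [LinearOrder R]
    [IsStrictOrderedRing R] {s : Finset ι} {w x : ι → R} {c : R} (hc : 0 ≤ c)
    (hw : ∑ i ∈ s, |w i| ≤ 1) (hx : ∀ i ∈ s, |x i| ≤ c) : |∑ i ∈ s, w i * x i| ≤ c :=
  calc |∑ i ∈ s, w i * x i|
      ≤ ∑ i ∈ s, |w i * x i| := abs_sum_le_sum_abs _ _
    _ ≤ ∑ i ∈ s, |w i| * c := by
        gcongr with i hi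
        rw [abs_mul]
        exact mul_le_mul_of_nonneg_left (hx i hi) (abs_nonneg _)
    _ = (∑ i ∈ s, |w i|) * c := (sum_mul _ _ _).symm
    _ ≤ c := mul_le_of_le_one_left hc hw

lemma dotProduct_sub_add_sum_sub_mul {m ι R : Type*} [Fintype m] [CommRing R] {s : Finset ι}
    (x θ θ' : m → R) (μ μ' : ι → m → R) (v : ι → R) :
    (x ⬝ᵥ fun i => θ' i - θ i + ∑ j ∈ s, (μ' j i - μ j i) * v j) =
      x ⬝ᵥ θ' - x ⬝ᵥ θ + ∑ j ∈ s, (x ⬝ᵥ μ' j - x ⬝ᵥ μ j) * v j := by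
  have hvec : (fun i => θ' i - θ i + ∑ j ∈ s, (μ' j i - μ j i) * v j) =
      θ' - θ + ∑ j ∈ s, v j • (μ' j - μ j) := by
    ext i
    simp [mul_comm]
  rw [hvec]
  simp only [dotProduct_add, dotProduct_sub, dotProduct_sum, dotProduct_smul, smul_eq_mul, mul_comm]

lemma exists_ne_sub_le_sub_add {A R : Type*} [CommRing R] [LinearOrder R] [IsStrictOrderedRing R]
    {q q' : A → R} {E : R} (hq : ∀ a, |q' a - q a| ≤ E) {b : A} (hb : ∀ a, q a ≤ q b) (b' : A)
    {a : A} (hab : a ≠ b) :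
    ∃ a' ≠ b', q' b' - q' a' ≤ q b - q a + 2 * E := by
  have hlip (x y : A) : q' x - q' y ≤ q x - q y + 2 * E := by
    linarith [(abs_le.1 (hq x)).2, (abs_le.1 (hq y)).1]
  by_cases hab' : a = b'
  · subst hab'
    exact ⟨b, hab.symm, by linarith [hlip a b, hb a]⟩
  · exact ⟨a, hab', by linarith [hlip b' a, hb b']⟩

/-- The rewards and transition weights of an episodic model at each step. The weights need not be
probability vectors, so that estimated models are covered too. -/
structure EpisodicModel (S A : Type*) where
  reward : ℕ → S → A → ℝ
  transition : ℕ → S → A → S → ℝ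

/-- `π` chooses a maximizer of `Q h s` at each of the steps `1, …, H`. -/
def IsGreedy {S A : Type*} (H : ℕ) (Q : ℕ → S → A → ℝ) (π : ℕ → S → A) : Prop :=
  ∀ h ∈ Icc 1 H, ∀ s a, Q h s a ≤ Q h s (π h s)

lemma isGreedy_of_forall_ne_lt {S A : Type*} {H : ℕ} {Q : ℕ → S → A → ℝ} {π : ℕ → S → A}
    (hπ : ∀ h ∈ Icc 1 H, ∀ s a, a ≠ π h s → Q h s a < Q h s (π h s)) : IsGreedy H Q π := by
  intro h hh s a
  obtain rfl | hne := eq_or_ne a (π h s)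
  · rfl
  · exact (hπ h hh s a hne).le

/-- The triples (step, state, action) at which the action differs from the one chosen by `π`. -/
def deviations {S A : Type*} [Fintype S] [Fintype A] [DecidableEq A] (H : ℕ) (π : ℕ → S → A) :
    Finset (ℕ × S × A) :=
  (Icc 1 H ×ˢ (univ : Finset (S × A))).filter fun x : ℕ × S × A => x.2.2 ≠ π x.1 x.2.1

lemma mk_mem_deviations {S A : Type*} [Fintype S] [Fintype A] [DecidableEq A] {H : ℕ}
    {π : ℕ → S → A} {h : ℕ} {s : S} {a : A} :
    (h, s, a) ∈ deviations H π ↔ h ∈ Icc 1 H ∧ a ≠ π h s := by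
  simp only [deviations, mem_filter, mem_product, mem_univ, and_true]

/-- The gap `Δ`: the least suboptimality `V h s - Q h s a` of an action `a ≠ π h s`.
The nonemptiness argument rules out the junk case in which there is no such action. -/
def minGap {S A : Type*} [Fintype S] [Fintype A] [DecidableEq A] {H : ℕ} {π : ℕ → S → A}
    (Q : ℕ → S → A → ℝ) (V : ℕ → S → ℝ) (hT : (deviations H π).Nonempty) : ℝ :=
  (deviations H π).inf' hT fun x => V x.1 x.2.1 - Q x.1 x.2.1 x.2.2

lemma minGap_le_minGap_add {S A : Type*} [Fintype S] [Fintype A] [DecidableEq A] {H : ℕ}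
    {Q Q' : ℕ → S → A → ℝ} {V V' : ℕ → S → ℝ} {π π' : ℕ → S → A} {E : ℝ}
    (hV : ∀ h ∈ Icc 1 H, ∀ s, V h s = Q h s (π h s))
    (hV' : ∀ h ∈ Icc 1 H, ∀ s, V' h s = Q' h s (π' h s))
    (hπ : IsGreedy H Q π) (hQ : ∀ h ∈ Icc 1 H, ∀ s a, |Q' h s a - Q h s a| ≤ E)
    (hT : (deviations H π).Nonempty) (hT' : (deviations H π').Nonempty) :
    minGap Q' V' hT' ≤ minGap Q V hT + 2 * E := by
  obtain ⟨⟨h, s, a⟩, hmem, hgap⟩ :=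
    exists_mem_eq_inf' hT fun x => V x.1 x.2.1 - Q x.1 x.2.1 x.2.2
  obtain ⟨hh, ha⟩ := mk_mem_deviations.1 hmem
  obtain ⟨a', ha', hle⟩ := exists_ne_sub_le_sub_add (hQ h hh s) (hπ h hh s) (π' h s) ha
  calc minGap Q' V' hT'
      ≤ V' h s - Q' h s a' := inf'_le (fun x : ℕ × S × A => V' x.1 x.2.1 - Q' x.1 x.2.1 x.2.2)
        (mk_mem_deviations.2 ⟨hh, ha'⟩)
    _ = Q' h s (π' h s) - Q' h s a' := by rw [hV' h hh s]
    _ ≤ Q h s (π h s) - Q h s a + 2 * E := hle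
    _ = minGap Q V hT + 2 * E := by rw [minGap, hgap, hV h hh s]

namespace EpisodicModel

variable {S A : Type*} [Fintype S]

/-- The error in the Bellman backup of the value function `V` at step `h` when the model `M'` is
replaced by `M`. -/
def backupError (M M' : EpisodicModel S A) (V : ℕ → S → ℝ) (h : ℕ) (s : S) (a : A) : ℝ :=
  M'.reward h s a - M.reward h s a +
    ∑ s', (M'.transition h s a s' - M.transition h s a s') * V (h + 1) s'

variable [Fintype A] [Nonempty A]

/-- `Q` and `V` solve the Bellman optimality recursion of `M` with horizon `H`: they are `Q*` and
`V*` on the steps `1, …, H`, and `V` vanishes at step `H + 1`. -/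
structure IsOptimal (M : EpisodicModel S A) (H : ℕ) (Q : ℕ → S → A → ℝ) (V : ℕ → S → ℝ) :
    Prop where
  terminal : ∀ s, V (H + 1) s = 0
  action_value : ∀ h ∈ Icc 1 H, ∀ s a,
    Q h s a = M.reward h s a + ∑ s', M.transition h s a s' * V (h + 1) s'
  value : ∀ h ∈ Icc 1 H, ∀ s, V h s = univ.sup' univ_nonempty fun a => Q h s a

namespace IsOptimal

variable {M M' : EpisodicModel S A} {H : ℕ} {Q Q' : ℕ → S → A → ℝ} {V V' : ℕ → S → ℝ}

lemma value_eq_of_isGreedy (hM : M.IsOptimal H Q V) {π : ℕ → S → A} (hπ : IsGreedy H Q π) :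
    ∀ h ∈ Icc 1 H, ∀ s, V h s = Q h s (π h s) := by
  intro h hh s
  rw [hM.value h hh s]
  exact le_antisymm (sup'_le _ _ fun a _ => hπ h hh s a) (le_sup' (Q h s) (mem_univ _))

lemma action_value_sub_action_value (hM : M.IsOptimal H Q V) (hM' : M'.IsOptimal H Q' V') {h : ℕ}
    (hh : h ∈ Icc 1 H) (s : S) (a : A) :
    Q' h s a - Q h s a = M.backupError M' V' h s a +
      ∑ s', M.transition h s a s' * (V' (h + 1) s' - V (h + 1) s') := by
  rw [hM'.action_value h hh, hM.action_value h hh, backupError]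
  simp only [mul_sub, sub_mul, sum_sub_distrib]
  ring

lemma abs_action_value_sub_le_add (hM : M.IsOptimal H Q V) (hM' : M'.IsOptimal H Q' V') {h : ℕ}
    (hh : h ∈ Icc 1 H) {s : S} {a : A} (hp : ∑ s', |M.transition h s a s'| ≤ 1) {δ c : ℝ}
    (hδ : |M.backupError M' V' h s a| ≤ δ) (hc : ∀ s', |V' (h + 1) s' - V (h + 1) s'| ≤ c) :
    |Q' h s a - Q h s a| ≤ δ + c := by
  rw [hM.action_value_sub_action_value hM' hh]
  have hc0 : 0 ≤ c := (abs_nonneg _).trans (hc s)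
  exact (abs_add_le _ _).trans
    (add_le_add hδ (abs_sum_mul_le_of_sum_abs_le_one hc0 hp fun s' _ => hc s'))

variable {ε : ℕ → ℝ}

lemma abs_value_sub_le_sum (hM : M.IsOptimal H Q V) (hM' : M'.IsOptimal H Q' V')
    (hp : ∀ h ∈ Icc 1 H, ∀ s a, ∑ s', |M.transition h s a s'| ≤ 1)
    (hε : ∀ h ∈ Icc 1 H, ∀ s a, |M.backupError M' V' h s a| ≤ ε h)
    {h : ℕ} (hh : h ∈ Icc 1 (H + 1)) (s : S) :
    |V' h s - V h s| ≤ ∑ k ∈ Icc h H, ε k := by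
  obtain ⟨h1, hH⟩ := mem_Icc.1 hh
  clear hh
  induction hH using Nat.decreasingInduction generalizing s with
  | self => simp [hM.terminal, hM'.terminal]
  | of_succ h hlt ih =>
    have hle : h ≤ H := Nat.lt_succ_iff.1 hlt
    have hh : h ∈ Icc 1 H := mem_Icc.2 ⟨h1, hle⟩
    rw [hM'.value h hh, hM.value h hh, ← add_sum_Ioc_eq_sum_Icc hle, ← Icc_add_one_left_eq_Ioc]
    exact abs_sup'_sub_sup'_le _ fun a _ =>
      hM.abs_action_value_sub_le_add hM' hh (hp h hh s a) (hε h hh s a) (ih · (by omega))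

lemma abs_action_value_sub_le_sum (hM : M.IsOptimal H Q V) (hM' : M'.IsOptimal H Q' V')
    (hp : ∀ h ∈ Icc 1 H, ∀ s a, ∑ s', |M.transition h s a s'| ≤ 1)
    (hε : ∀ h ∈ Icc 1 H, ∀ s a, |M.backupError M' V' h s a| ≤ ε h)
    {h : ℕ} (hh : h ∈ Icc 1 H) (s : S) (a : A) :
    |Q' h s a - Q h s a| ≤ ∑ k ∈ Icc h H, ε k := by
  obtain ⟨h1, hH⟩ := mem_Icc.1 hh
  rw [← add_sum_Ioc_eq_sum_Icc hH, ← Icc_add_one_left_eq_Ioc]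
  exact hM.abs_action_value_sub_le_add hM' hh (hp h hh s a) (hε h hh s a)
    (hM.abs_value_sub_le_sum hM' hp hε (mem_Icc.2 ⟨by omega, by omega⟩))

end IsOptimal

end EpisodicModel

theorem stmt_13_general {S A : Type*} [Fintype S] [Fintype A] [Nonempty A] [DecidableEq A]
    {H : ℕ} {M M' : EpisodicModel S A} {Q Q' : ℕ → S → A → ℝ} {V V' : ℕ → S → ℝ}
    {π π' : ℕ → S → A} {ε : ℕ → ℝ}
    (hM : M.IsOptimal H Q V) (hM' : M'.IsOptimal H Q' V')
    (hp : ∀ h ∈ Icc 1 H, ∀ s a, ∑ s', |M.transition h s a s'| ≤ 1)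
    (hπ : IsGreedy H Q π) (hπ' : IsGreedy H Q' π')
    (hε : ∀ h ∈ Icc 1 H, ∀ s a, |M.backupError M' V' h s a| ≤ ε h)
    (hT : (deviations H π).Nonempty) (hT' : (deviations H π').Nonempty) :
    |minGap Q' V' hT' - minGap Q V hT| ≤ 2 * ∑ h ∈ Icc 1 H, ε h := by
  have hQ (h) (hh : h ∈ Icc 1 H) (s a) : |Q' h s a - Q h s a| ≤ ∑ k ∈ Icc 1 H, ε k := by
    refine (hM.abs_action_value_sub_le_sum hM' hp hε hh s a).trans ?_
    exact sum_le_sum_of_subset_of_nonneg (Icc_subset_Icc_left (mem_Icc.1 hh).1)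
      fun k hk _ => (abs_nonneg _).trans (hε k hk s a)
  have hV := hM.value_eq_of_isGreedy hπ
  have hV' := hM'.value_eq_of_isGreedy hπ'
  rw [abs_sub_le_iff, sub_le_iff_le_add', sub_le_iff_le_add']
  exact ⟨minGap_le_minGap_add hV hV' hπ hQ hT hT',
    minGap_le_minGap_add hV' hV hπ' (fun h hh s a => abs_sub_comm (Q h s a) _ ▸ hQ h hh s a) hT' hT⟩

theorem stmt_13 {S A : Type*} [Fintype S] [Fintype A] [Nonempty S] [Nonempty A]
    [DecidableEq A]
    {d : ℕ} (φ : S → A → Fin d → ℝ) (H : ℕ) (hH : 1 ≤ H)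
    (p phat : ℕ → S → A → S → ℝ) (r rhat : ℕ → S → A → ℝ)
    (hp0 : ∀ h ∈ Finset.Icc 1 H, ∀ s a s', 0 ≤ p h s a s')
    (hp1 : ∀ h ∈ Finset.Icc 1 H, ∀ s a, ∑ s', p h s a s' = 1)
    (hp0hat : ∀ h ∈ Finset.Icc 1 H, ∀ s a s', 0 ≤ phat h s a s')
    (hp1hat : ∀ h ∈ Finset.Icc 1 H, ∀ s a, ∑ s', phat h s a s' = 1)
    (θ θhat : ℕ → Fin d → ℝ) (μ μhat : ℕ → S → Fin d → ℝ)
    (hr : ∀ h ∈ Finset.Icc 1 H, ∀ s a, r h s a = φ s a ⬝ᵥ θ h)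
    (hP : ∀ h ∈ Finset.Icc 1 H, ∀ s a s', p h s a s' = φ s a ⬝ᵥ μ h s')
    (hrhat : ∀ h ∈ Finset.Icc 1 H, ∀ s a, rhat h s a = φ s a ⬝ᵥ θhat h)
    (hPhat : ∀ h ∈ Finset.Icc 1 H, ∀ s a s', phat h s a s' = φ s a ⬝ᵥ μhat h s')
    -- optimal value functions of M
    (Vstar : ℕ → S → ℝ) (Qstar : ℕ → S → A → ℝ)
    (hVstarTop : ∀ s, Vstar (H + 1) s = 0)
    (hQstar : ∀ h ∈ Finset.Icc 1 H, ∀ s a,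
      Qstar h s a = r h s a + ∑ s', p h s a s' * Vstar (h + 1) s')
    (hVstar : ∀ h ∈ Finset.Icc 1 H, ∀ s,
      Vstar h s = univ.sup' univ_nonempty fun a => Qstar h s a)
    -- optimal value functions of M̂
    (Vhat : ℕ → S → ℝ) (Qhat : ℕ → S → A → ℝ)
    (hVhatTop : ∀ s, Vhat (H + 1) s = 0)
    (hQhat : ∀ h ∈ Finset.Icc 1 H, ∀ s a,
      Qhat h s a = rhat h s a + ∑ s', phat h s a s' * Vhat (h + 1) s')
    (hVhat : ∀ h ∈ Finset.Icc 1 H, ∀ s,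
      Vhat h s = univ.sup' univ_nonempty fun a => Qhat h s a)
    -- unique optimal policies
    (πstar πhat : ℕ → S → A)
    (hπ : ∀ h ∈ Finset.Icc 1 H, ∀ s a, a ≠ πstar h s →
      Qstar h s a < Qstar h s (πstar h s))
    (hπhat : ∀ h ∈ Finset.Icc 1 H, ∀ s a, a ≠ πhat h s →
      Qhat h s a < Qhat h s (πhat h s))
    -- the gaps
    (T That : Finset (ℕ × S × A))
    (hTdef : T = (Finset.Icc 1 H ×ˢ (univ : Finset (S × A))).filter
      fun x : ℕ × S × A => x.2.2 ≠ πstar x.1 x.2.1)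
    (hThatdef : That = (Finset.Icc 1 H ×ˢ (univ : Finset (S × A))).filter
      fun x : ℕ × S × A => x.2.2 ≠ πhat x.1 x.2.1)
    (hT : T.Nonempty) (hThat : That.Nonempty) :
    |That.inf' hThat (fun x => Vhat x.1 x.2.1 - Qhat x.1 x.2.1 x.2.2) -
        T.inf' hT (fun x => Vstar x.1 x.2.1 - Qstar x.1 x.2.1 x.2.2)| ≤
      2 * ∑ h ∈ Finset.Icc 1 H,
        (univ.sup' univ_nonempty fun sa : S × A =>
          |φ sa.1 sa.2 ⬝ᵥ fun i =>
            θhat h i - θ h i + ∑ s', (μhat h s' i - μ h s' i) * Vhat (h + 1) s'|) := by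
  subst hTdef hThatdef
  refine stmt_13_general (M := ⟨r, p⟩) (M' := ⟨rhat, phat⟩) ⟨hVstarTop, hQstar, hVstar⟩
    ⟨hVhatTop, hQhat, hVhat⟩ (fun h hh s a => ?_) (isGreedy_of_forall_ne_lt hπ)
    (isGreedy_of_forall_ne_lt hπhat) (fun h hh s a => ?_) hT hThat
  · simp only [abs_of_nonneg (hp0 h hh s a _), hp1 h hh s a, le_refl]
  · simp only [EpisodicModel.backupError, hr h hh, hrhat h hh, hP h hh, hPhat h hh,
      ← dotProduct_sub_add_sum_sub_mul]
    exact le_sup' (fun sa : S × A => |φ sa.1 sa.2 ⬝ᵥ fun i =>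
      θhat h i - θ h i + ∑ s', (μhat h s' i - μ h s' i) * Vhat (h + 1) s'|) (mem_univ (s, a))
end

section
/- Let M and M' be two linear discounted MDPs on (S, A) with common feature map φ : S×A → ℝ^d and common discount γ ∈ (0,1), with parameters (θ_M, μ_M) and (θ_{M'}, μ_{M'}) respectively. Let ε > 0, suppose M has a unique optimal policy π*_M (for every s, Q*_M(s,·) has a unique maximizer), and suppose π*_M is not ε-optimal for M'. Then Δ(M) + ε ≤ (2/(1−γ))·max_{(s,a)∈S×A} |φ(s,a)ᵀ(θ_M − θ_{M'} + γ·Σ_{s'∈S} (μ_M(s') − μ_{M'}(s'))·V*_M(s'))|. -/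
/-!
Linearity identifies the expression in the bound with the Bellman error `Q* - T' V*`, where
`T' V s a = r' s a + γ ∑ p' s a s' V s'` is the backup of the second model. Let `B` be its largest
absolute value. Since `T'` is a `γ`-contraction, `V'* - V*` and `V* - V'^{π*}` are at most
`B / (1 - γ)`, and hence so is `Q'* - Q* ≤ B + γ (B / (1 - γ))`.

Choose a state `s` maximizing the loss `V'* - V'^{π*}`, which exceeds `ε` there, and an action `a`
optimal for the second model at `s`. If `a = π* s`, the loss at `s` would be `γ` times an average of
losses, hence strictly less than their maximum. So `a ≠ π* s`, the pair `(s, a)` enters the minimum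
defining the gap `Δ`, and
`ε ≤ (Q'*(s,a) - Q*(s,a)) + (Q*(s,a) - V* s) + (V* s - V'^{π*} s) ≤ 2 B / (1 - γ) - Δ`.
-/

open Matrix Finset

theorem isGreatest_range_sup'_univ {ι α : Type*} [Fintype ι] [Nonempty ι] [LinearOrder α]
    (f : ι → α) : IsGreatest (Set.range f) (univ.sup' univ_nonempty f) := by
  obtain ⟨i, -, hi⟩ := exists_mem_eq_sup' univ_nonempty f
  exact ⟨⟨i, hi.symm⟩, Set.forall_mem_range.2 fun j => le_sup' f (mem_univ j)⟩

theorem sup'_univ_le_of_forall_ne_le {ι α : Type*} [Fintype ι] [Nonempty ι] [SemilatticeSup α]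
    {f : ι → α} {i : ι} (h : ∀ j, j ≠ i → f j ≤ f i) : univ.sup' univ_nonempty f ≤ f i :=
  sup'_le _ _ fun j _ => (eq_or_ne j i).elim (fun hj => hj ▸ le_rfl) (h j)

theorem dotProduct_le_of_mem_stdSimplex {ι : Type*} [Fintype ι] {q f : ι → ℝ} {m : ℝ}
    (hq : q ∈ stdSimplex ℝ ι) (hf : ∀ i, f i ≤ m) : q ⬝ᵥ f ≤ m :=
  calc q ⬝ᵥ f ≤ ∑ i, q i * m := sum_le_sum fun i _ => mul_le_mul_of_nonneg_left (hf i) (hq.1 i)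
    _ = m := by rw [← sum_mul, hq.2, one_mul]

/-- A discounted Markov decision process with finite state space `S` and action space `A`.
Rewards enter only through their expectations `reward s a`. -/
structure DiscountedMDP (S A : Type*) [Fintype S] where
  discount : ℝ
  discount_nonneg : 0 ≤ discount
  discount_lt_one : discount < 1
  transition : S → A → S → ℝ
  transition_mem : ∀ s a, transition s a ∈ stdSimplex ℝ S
  reward : S → A → ℝ

namespace DiscountedMDP

variable {S A : Type*} [Fintype S] (M : DiscountedMDP S A)

/-- The Bellman backup of `V`: the expected return of playing `a` in `s` and then collecting the
discounted value `V` of the next state. -/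
def backup (V : S → ℝ) (s : S) (a : A) : ℝ :=
  M.reward s a + M.discount * (M.transition s a ⬝ᵥ V)

/-- `V` solves the Bellman equation of the deterministic policy `π`, which characterizes the value
function of `π`. -/
def IsPolicyValue (π : S → A) (V : S → ℝ) : Prop :=
  ∀ s, V s = M.backup V s (π s)

/-- `V` solves the Bellman optimality equation, which characterizes the optimal value function.
The maximum over actions is required to be attained, so `A` may be infinite. -/
def IsOptimalValue (V : S → ℝ) : Prop :=
  ∀ s, IsGreatest (Set.range (M.backup V s)) (V s)

/-- The rewards and transition probabilities are linear in the features `φ`, with parameters `θ`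
and `μ`. -/
structure IsLinear {ι : Type*} [Fintype ι] (φ : S → A → ι → ℝ) (θ : ι → ℝ) (μ : S → ι → ℝ) :
    Prop where
  reward_eq : ∀ s a, M.reward s a = φ s a ⬝ᵥ θ
  transition_eq : ∀ s a s', M.transition s a s' = φ s a ⬝ᵥ μ s'

section Linear

variable {M} {ι : Type*} [Fintype ι] {φ : S → A → ι → ℝ} {θ θ' : ι → ℝ} {μ μ' : S → ι → ℝ}

theorem IsLinear.backup_eq (hM : M.IsLinear φ θ μ) (V : S → ℝ) (s : S) (a : A) :
    M.backup V s a = φ s a ⬝ᵥ (θ + M.discount • (V ᵥ* of μ)) := by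
  have transition_eq_mulVec : M.transition s a = of μ *ᵥ φ s a :=
    funext fun s' => (hM.transition_eq s a s').trans (dotProduct_comm _ _)
  rw [backup, hM.reward_eq, transition_eq_mulVec, dotProduct_add, dotProduct_smul, smul_eq_mul,
    dotProduct_comm _ V, dotProduct_mulVec, dotProduct_comm (φ s a) (V ᵥ* of μ)]

theorem IsLinear.backup_sub_backup {M' : DiscountedMDP S A} (hM : M.IsLinear φ θ μ)
    (hM' : M'.IsLinear φ θ' μ') (hγ : M.discount = M'.discount) (V : S → ℝ) (s : S) (a : A) :
    M.backup V s a - M'.backup V s a =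
      φ s a ⬝ᵥ fun i => θ i - θ' i + M.discount * ∑ s', (μ s' i - μ' s' i) * V s' := by
  rw [hM.backup_eq, hM'.backup_eq, ← hγ, ← dotProduct_sub]
  congr 1 with i
  simp only [Pi.sub_apply, Pi.add_apply, Pi.smul_apply, smul_eq_mul, vecMul, dotProduct, of_apply,
    sub_mul, sum_sub_distrib, mul_comm (V _)]
  ring

end Linear

variable {M} {V W : S → ℝ} {π : S → A} {B ε : ℝ}

theorem backup_sub_backup_le {m : ℝ} (h : ∀ s, V s - W s ≤ m) (s : S) (a : A) :
    M.backup V s a - M.backup W s a ≤ M.discount * m :=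
  calc M.backup V s a - M.backup W s a = M.discount * (M.transition s a ⬝ᵥ (V - W)) := by
        rw [backup, backup, dotProduct_sub]
        ring
    _ ≤ M.discount * m := mul_le_mul_of_nonneg_left
        (dotProduct_le_of_mem_stdSimplex (M.transition_mem s a) h) M.discount_nonneg

theorem sub_le_div_of_forall_exists_backup
    (h : ∀ s, ∃ a, V s - W s ≤ B + (M.backup V s a - M.backup W s a)) (s : S) :
    V s - W s ≤ B / (1 - M.discount) := by
  have : Nonempty S := ⟨s⟩
  obtain ⟨s₀, hmax⟩ := Finite.exists_max fun s => V s - W s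
  obtain ⟨a, ha⟩ := h s₀
  have hcontract := backup_sub_backup_le (M := M) hmax s₀ a
  refine (hmax s).trans ?_
  rw [le_div_iff₀ (sub_pos.2 M.discount_lt_one)]
  linarith

theorem IsOptimalValue.sub_le_div (hV : M.IsOptimalValue V)
    (hW : ∀ s a, M.backup W s a ≤ W s + B) (s : S) : V s - W s ≤ B / (1 - M.discount) :=
  sub_le_div_of_forall_exists_backup (fun s => by
    obtain ⟨a, ha⟩ := (hV s).1
    exact ⟨a, by linarith [hW s a]⟩) s

theorem IsPolicyValue.sub_le_div (hW : M.IsPolicyValue π W)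
    (hV : ∀ s, V s ≤ M.backup V s (π s) + B) (s : S) : V s - W s ≤ B / (1 - M.discount) :=
  sub_le_div_of_forall_exists_backup (fun s => ⟨π s, by linarith [hV s, hW s]⟩) s

theorem IsOptimalValue.backup_sub_le_div (hV : M.IsOptimalValue V) {Q : S → A → ℝ}
    (hQW : ∀ s a, Q s a ≤ W s) (hQ : ∀ s a, M.backup W s a ≤ Q s a + B) (s : S) (a : A) :
    M.backup V s a - Q s a ≤ B / (1 - M.discount) := by
  have hVW := hV.sub_le_div fun s a => (hQ s a).trans (by gcongr; exact hQW s a)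
  have hcontract := backup_sub_backup_le (M := M) hVW s a
  have hfixed : B + M.discount * (B / (1 - M.discount)) = B / (1 - M.discount) := by
    field_simp [(sub_pos.2 M.discount_lt_one).ne']
    ring
  linarith [hQ s a]

theorem IsOptimalValue.exists_ne_policy_of_not_forall_sub_le (hV : M.IsOptimalValue V)
    (hW : M.IsPolicyValue π W) (hε : 0 ≤ ε) (hopt : ¬ ∀ s, V s - ε ≤ W s) :
    ∃ s a, a ≠ π s ∧ M.backup V s a = V s ∧ ε < V s - W s := by
  push Not at hopt
  obtain ⟨s₁, hs₁⟩ := hopt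
  have : Nonempty S := ⟨s₁⟩
  obtain ⟨s, hmax⟩ := Finite.exists_max fun s => V s - W s
  have hloss : ε < V s - W s := by linarith [hmax s₁]
  obtain ⟨a, ha⟩ := (hV s).1
  refine ⟨s, a, ?_, ha, hloss⟩
  rintro rfl
  have hcontract : V s - W s ≤ M.discount * (V s - W s) := by
    simpa only [ha, ← hW s] using backup_sub_backup_le (M := M) hmax s (π s)
  exact hcontract.not_gt (mul_lt_of_lt_one_left (hε.trans_lt hloss) M.discount_lt_one)

end DiscountedMDP

/-- For the optimal `Q` and `V` of another model with the same discount, `Q - M.backup V` is the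
difference of the rewards plus the discounted difference of the expectations of `V`. -/
theorem stmt_15_general {S A : Type*} [Fintype S] {M : DiscountedMDP S A}
    {Q : S → A → ℝ} {V Vopt Vπ : S → ℝ} {π : S → A} {Δ B ε : ℝ}
    (hε : 0 ≤ ε) (hQ : ∀ s a, Q s a ≤ V s) (hπ : ∀ s, V s ≤ Q s (π s))
    (hVopt : M.IsOptimalValue Vopt) (hVπ : M.IsPolicyValue π Vπ)
    (hnotopt : ¬ ∀ s, Vopt s - ε ≤ Vπ s) (hΔ : ∀ s a, a ≠ π s → Δ ≤ V s - Q s a)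
    (hB : ∀ s a, |Q s a - M.backup V s a| ≤ B) :
    Δ + ε ≤ 2 / (1 - M.discount) * B := by
  obtain ⟨s, a, hne, ha, hloss⟩ := hVopt.exists_ne_policy_of_not_forall_sub_le hVπ hε hnotopt
  have hQopt : Vopt s - Q s a ≤ B / (1 - M.discount) := ha ▸
    hVopt.backup_sub_le_div hQ (fun s a => by linarith [(abs_le.1 (hB s a)).1]) s a
  have hVπ_close : V s - Vπ s ≤ B / (1 - M.discount) :=
    hVπ.sub_le_div (fun s => by linarith [(abs_le.1 (hB s (π s))).2, hπ s]) s
  calc Δ + ε ≤ B / (1 - M.discount) + B / (1 - M.discount) := by linarith [hΔ s a hne]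
    _ = 2 / (1 - M.discount) * B := by ring

theorem stmt_15 {S A : Type*} [Fintype S] [Fintype A] [Nonempty S] [Nonempty A]
    [DecidableEq A]
    {d : ℕ} (φ : S → A → Fin d → ℝ) (γ : ℝ) (hγ : γ ∈ Set.Ioo (0 : ℝ) 1)
    (ε : ℝ) (hε : 0 < ε)
    (p p' : S → A → S → ℝ) (r r' : S → A → ℝ)
    (hp0 : ∀ s a s', 0 ≤ p s a s') (hp1 : ∀ s a, ∑ s', p s a s' = 1)
    (hp0' : ∀ s a s', 0 ≤ p' s a s') (hp1' : ∀ s a, ∑ s', p' s a s' = 1)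
    (θ θ' : Fin d → ℝ) (μ μ' : S → Fin d → ℝ)
    (hr : ∀ s a, r s a = φ s a ⬝ᵥ θ) (hP : ∀ s a s', p s a s' = φ s a ⬝ᵥ μ s')
    (hr' : ∀ s a, r' s a = φ s a ⬝ᵥ θ') (hP' : ∀ s a s', p' s a s' = φ s a ⬝ᵥ μ' s')
    -- optimal value functions of M
    (Vstar : S → ℝ) (Qstar : S → A → ℝ)
    (hQstar : ∀ s a, Qstar s a = r s a + γ * ∑ s', p s a s' * Vstar s')
    (hVstar : ∀ s, Vstar s = univ.sup' univ_nonempty fun a => Qstar s a)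
    -- optimal value functions of M'
    (V'star : S → ℝ) (Q'star : S → A → ℝ)
    (hQ'star : ∀ s a, Q'star s a = r' s a + γ * ∑ s', p' s a s' * V'star s')
    (hV'star : ∀ s, V'star s = univ.sup' univ_nonempty fun a => Q'star s a)
    -- unique optimal policy of M
    (πstar : S → A)
    (hπ : ∀ s a, a ≠ πstar s → Qstar s a < Qstar s (πstar s))
    -- value functions of πstar in M'
    (Vpi' : S → ℝ) (Qpi' : S → A → ℝ)
    (hQpi' : ∀ s a, Qpi' s a = r' s a + γ * ∑ s', p' s a s' * Vpi' s')
    (hVpi' : ∀ s, Vpi' s = Qpi' s (πstar s))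
    -- πstar is not ε-optimal for M'
    (hnotopt : ¬ ∀ s, V'star s - ε ≤ Vpi' s)
    -- the suboptimality gap of M
    (T : Finset (S × A)) (hTdef : T = univ.filter fun sa : S × A => sa.2 ≠ πstar sa.1)
    (hT : T.Nonempty) :
    T.inf' hT (fun sa => Vstar sa.1 - Qstar sa.1 sa.2) + ε ≤
      (2 / (1 - γ)) *
        (univ.sup' univ_nonempty fun sa : S × A =>
          |φ sa.1 sa.2 ⬝ᵥ fun i =>
            θ i - θ' i + γ * ∑ s', (μ s' i - μ' s' i) * Vstar s'|) := by
  let M : DiscountedMDP S A := ⟨γ, hγ.1.le, hγ.2, p, fun s a => ⟨hp0 s a, hp1 s a⟩, r⟩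
  let M' : DiscountedMDP S A := ⟨γ, hγ.1.le, hγ.2, p', fun s a => ⟨hp0' s a, hp1' s a⟩, r'⟩
  have hM : M.IsLinear φ θ μ := ⟨hr, hP⟩
  have hM' : M'.IsLinear φ θ' μ' := ⟨hr', hP'⟩
  obtain rfl : Qstar = M.backup Vstar := funext₂ hQstar
  obtain rfl : Q'star = M'.backup V'star := funext₂ hQ'star
  have hVπ : M'.IsPolicyValue πstar Vpi' := fun s => (hVpi' s).trans (hQpi' s (πstar s))
  refine stmt_15_general hε.le (fun s a => hVstar s ▸ le_sup' (M.backup Vstar s) (mem_univ a))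
    (fun s => hVstar s ▸ sup'_univ_le_of_forall_ne_le fun a h => (hπ s a h).le)
    (fun s => hV'star s ▸ isGreatest_range_sup'_univ _) hVπ hnotopt (fun s a h => ?_) fun s a => ?_
  · exact inf'_le (fun sa : S × A => Vstar sa.1 - M.backup Vstar sa.1 sa.2) (b := (s, a))
      (by simpa [hTdef] using h)
  · rw [hM.backup_sub_backup hM' rfl]
    exact le_sup' (fun sa : S × A => |φ sa.1 sa.2 ⬝ᵥ fun i =>
      θ i - θ' i + γ * ∑ s', (μ s' i - μ' s' i) * Vstar s'|) (mem_univ (s, a))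
end

section
/- Let M be a linear discounted MDP on (S, A) with feature map φ : S×A → ℝ^d, discount γ ∈ (0,1), reward distributions q_M(s,a) that are probability measures supported on [0,1] with means r_M(s,a), and a unique optimal policy π*_M (for every s, Q*_M(s,·) has a unique maximizer), with suboptimality gap Δ(M). Let ε > 0 and let ω be a probability vector on S×A such that Λ(ω) is invertible. Then for every linear discounted MDP M' on (S, A) with the same feature map φ and discount γ, with reward distributions q_{M'}(s,a) supported on [0,1], such that π*_M is not ε-optimal for M', it holds that Σ_{(s,a)∈S×A} ω(s,a)·KL_{M|M'}(s,a) ≥ 3(1−γ)⁴·(Δ(M)+ε)² / (10·σ(ω)). -/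
open Matrix Finset MeasureTheory
open scoped Classical

/-- Kullback–Leibler divergence between measures: `∫ log (dα/dβ) dα` when `α ≪ β` (and the
log-likelihood ratio is integrable), `+∞` otherwise. -/
noncomputable def klDiv {Ω : Type*} [MeasurableSpace Ω] (α β : Measure Ω) : EReal :=
  if α ≪ β ∧ Integrable (llr α β) α then ((∫ x, llr α β x ∂α : ℝ) : EReal) else ⊤

/-- Kullback–Leibler divergence between probability vectors on a finite set. -/
noncomputable def klFin {S : Type*} [Fintype S] (p q : S → ℝ) : EReal :=
  if ∀ s, q s = 0 → p s = 0
  then ((∑ s, p s * Real.log (p s / q s) : ℝ) : EReal) else ⊤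

/-!
Let `g = r - r' + γ (P - P') V*` be the one-step Bellman error of `M'` at the optimal value `V*` of
`M`. If the optimal policy `π` of `M` is not `ε`-optimal for `M'`, consider the state where
`V'* - V'^π` is largest: there an action greedy for `M'` must differ from `π`, hence loses at least
`Δ` in `M`, and `Δ + ε` is bounded by two value differences, each the solution of a Bellman
recursion of `M'` driven by `± g`. So `Δ + ε ≤ 2 max |g| / (1 - γ)`. Linearity makes `g` linear in
the features, and Cauchy–Schwarz in the geometry of `Λ(ω)` yields `max g² ≤ σ(ω) ∑ ω g²`. Finally
Donsker–Varadhan duality with Hoeffding's lemma bounds `2 (1 - γ)² g²` by the divergence of `M`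
from `M'`. Altogether the bound holds with `1 / 2` in place of `3 / 10`.
-/

section KullbackLeibler

variable {Ω : Type*} [MeasurableSpace Ω] {α β : Measure Ω} [IsProbabilityMeasure α]
  [IsProbabilityMeasure β]

-- Gibbs' inequality for `α` against `β` exponentially tilted by `f`.
lemma donsker_varadhan {f : Ω → ℝ} (hac : α ≪ β) (hllr : Integrable (llr α β) α)
    (hf : Integrable f α) (hexp : Integrable (fun x => Real.exp (f x)) β) :
    (∫ x, f x ∂α) - Real.log (∫ x, Real.exp (f x) ∂β) ≤ ∫ x, llr α β x ∂α := by
  have := isProbabilityMeasure_tilted hexp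
  have gibbs := InformationTheory.integral_llr_add_sub_measure_univ_nonneg
    (hac.trans (absolutelyContinuous_tilted hexp))
    (integrable_llr_tilted_right hac hf hllr hexp)
  rw [integral_llr_tilted_right hac hf hexp hllr] at gibbs
  simp only [probReal_univ] at gibbs
  linarith

lemma sq_integral_le_of_hasSubgaussianMGF {X : Ω → ℝ} {c : NNReal} (hac : α ≪ β)
    (hllr : Integrable (llr α β) α) (hX : Integrable X α)
    (hsub : ProbabilityTheory.HasSubgaussianMGF X c β) :
    (∫ x, X x ∂α) ^ 2 ≤ 2 * c * ∫ x, llr α β x ∂α := by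
  have quadratic_nonneg : ∀ t : ℝ,
      0 ≤ (c / 2 : ℝ) * (t * t) + -(∫ x, X x ∂α) * t + ∫ x, llr α β x ∂α := fun t => by
    have hdv := donsker_varadhan hac hllr (hX.const_mul t) (hsub.integrable_exp_mul t)
    have hcgf : Real.log (∫ x, Real.exp (t * X x) ∂β) ≤ c * t ^ 2 / 2 := hsub.cgf_le t
    rw [integral_const_mul] at hdv
    linarith
  have hdiscrim := discrim_le_zero quadratic_nonneg
  rw [discrim] at hdiscrim
  linarith

lemma sq_integral_sub_integral_le_klDiv {X : Ω → ℝ} {a b : ℝ} (hab : a < b)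
    (hX : AEMeasurable X β) (hXab : ∀ᵐ x ∂β, X x ∈ Set.Icc a b) :
    ((2 * ((∫ x, X x ∂α) - ∫ x, X x ∂β) ^ 2 / (b - a) ^ 2 : ℝ) : EReal) ≤ klDiv α β := by
  rw [klDiv]
  split_ifs with h
  · obtain ⟨hac, hllr⟩ := h
    have hXα : Integrable X α := .of_mem_Icc a b (hX.mono_ac hac) (hac.ae_le hXab)
    have hsq := sq_integral_le_of_hasSubgaussianMGF hac hllr
      (hXα.sub (integrable_const (∫ x, X x ∂β)))
      (ProbabilityTheory.hasSubgaussianMGF_of_mem_Icc hX hXab)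
    have hvar : (((‖b - a‖₊ / 2) ^ 2 : NNReal) : ℝ) = (b - a) ^ 2 / 4 := by
      push_cast
      rw [Real.norm_eq_abs, div_pow, sq_abs]
      norm_num
    simp only [Pi.sub_apply] at hsq
    rw [integral_sub hXα (integrable_const _), integral_const, probReal_univ, one_smul,
      hvar] at hsq
    rw [EReal.coe_le_coe_iff, div_le_iff₀ (pow_pos (sub_pos.2 hab) 2)]
    linarith
  · exact le_top

end KullbackLeibler

lemma ereal_coe_sum {ι : Type*} (s : Finset ι) (f : ι → ℝ) :
    ((∑ i ∈ s, f i : ℝ) : EReal) = ∑ i ∈ s, (f i : EReal) :=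
  map_sum (⟨⟨Real.toEReal, EReal.coe_zero⟩, EReal.coe_add⟩ : ℝ →+ EReal) f s

lemma isGreatest_range_of_eq_sup' {κ : Type*} [Fintype κ] [Nonempty κ] {f : κ → ℝ} {c : ℝ}
    (hc : c = univ.sup' univ_nonempty f) : IsGreatest (Set.range f) c := by
  subst hc
  obtain ⟨k, -, hk⟩ := exists_mem_eq_sup' univ_nonempty f
  exact ⟨⟨k, hk.symm⟩, Set.forall_mem_range.2 fun k => le_sup' f (mem_univ k)⟩

lemma three_mul_div_ten_mul_le {c σ : ℝ} (hc : 0 ≤ c) (hσ : 0 ≤ σ) :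
    3 * c / (10 * σ) ≤ c / (2 * σ) :=
  calc 3 * c / (10 * σ) = 3 / 5 * (c / (2 * σ)) := by ring
    _ ≤ c / (2 * σ) := mul_le_of_le_one_left (by positivity) (by norm_num)

section ProbabilityVector

variable {S : Type*} [Fintype S] {p q : S → ℝ}

lemma dotProduct_le_of_mem_stdSimplex_s16 {f : S → ℝ} {c : ℝ} (hp : p ∈ stdSimplex ℝ S)
    (hf : ∀ s, f s ≤ c) : p ⬝ᵥ f ≤ c :=
  calc p ⬝ᵥ f ≤ p ⬝ᵥ fun _ => c := dotProduct_le_dotProduct_of_nonneg_left hf hp.1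
    _ = c := by rw [dotProduct, ← Finset.sum_mul, hp.2, one_mul]

/-- The probability mass function of a real probability vector, through which the finite divergence
`klFin` is compared with the measure-theoretic `klDiv`. -/
noncomputable def pmfOfMemStdSimplex (hp : p ∈ stdSimplex ℝ S) : PMF S :=
  PMF.ofFintype (fun s => ENNReal.ofReal (p s)) (by
    rw [← ENNReal.ofReal_sum_of_nonneg fun s _ => hp.1 s, hp.2, ENNReal.ofReal_one])

section Measurable

variable [MeasurableSpace S] [MeasurableSingletonClass S]

lemma pmfOfMemStdSimplex_toMeasure_singleton (hp : p ∈ stdSimplex ℝ S) (s : S) :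
    (pmfOfMemStdSimplex hp).toMeasure {s} = ENNReal.ofReal (p s) :=
  PMF.toMeasure_apply_singleton _ _ (measurableSet_singleton s)

lemma integral_pmfOfMemStdSimplex (hp : p ∈ stdSimplex ℝ S) (f : S → ℝ) :
    ∫ s, f s ∂(pmfOfMemStdSimplex hp).toMeasure = p ⬝ᵥ f := by
  rw [PMF.integral_eq_sum]
  exact Finset.sum_congr rfl fun s _ =>
    congrArg (· * f s) (ENNReal.toReal_ofReal (hp.1 s))

lemma pmfOfMemStdSimplex_absolutelyContinuous_iff (hp : p ∈ stdSimplex ℝ S)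
    (hq : q ∈ stdSimplex ℝ S) :
    (pmfOfMemStdSimplex hp).toMeasure ≪ (pmfOfMemStdSimplex hq).toMeasure ↔
      ∀ s, q s = 0 → p s = 0 := by
  have null_iff {u : S → ℝ} (hu : u ∈ stdSimplex ℝ S) (t : Set S) :
      (pmfOfMemStdSimplex hu).toMeasure t = 0 ↔ ∀ s ∈ t, u s = 0 := by
    rw [← Set.biUnion_of_singleton t, measure_biUnion_null_iff t.to_countable]
    simp only [pmfOfMemStdSimplex_toMeasure_singleton, ENNReal.ofReal_eq_zero,
      Set.biUnion_of_singleton]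
    exact forall₂_congr fun s _ => (hu.1 s).ge_iff_eq'
  refine ⟨fun hac s hqs => ?_, fun h t ht => ?_⟩
  · exact (null_iff hp {s}).1 (hac ((null_iff hq {s}).2 fun _ hs => by rwa [hs])) s rfl
  · exact (null_iff hp t).2 fun s hs => h s ((null_iff hq t).1 ht s hs)

lemma klDiv_pmfOfMemStdSimplex (hp : p ∈ stdSimplex ℝ S) (hq : q ∈ stdSimplex ℝ S) :
    klDiv (pmfOfMemStdSimplex hp).toMeasure (pmfOfMemStdSimplex hq).toMeasure = klFin p q := by
  set α := (pmfOfMemStdSimplex hp).toMeasure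
  set β := (pmfOfMemStdSimplex hq).toMeasure
  refine if_ctx_congr ((and_iff_left Integrable.of_finite).trans
    (pmfOfMemStdSimplex_absolutelyContinuous_iff hp hq)) (fun hac => ?_) fun _ => rfl
  rw [integral_pmfOfMemStdSimplex]
  congr 1
  refine Finset.sum_congr rfl fun s _ => ?_
  rcases eq_or_ne (p s) 0 with hps | hps
  · rw [hps, zero_mul, zero_mul]
  have hqs : q s ≠ 0 := mt (hac s) hps
  have rnDeriv_mul : (α.rnDeriv β s).toReal * q s = p s := by
    have h := Measure.setLIntegral_rnDeriv
      ((pmfOfMemStdSimplex_absolutelyContinuous_iff hp hq).2 hac) {s}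
    rw [lintegral_singleton, pmfOfMemStdSimplex_toMeasure_singleton,
      pmfOfMemStdSimplex_toMeasure_singleton] at h
    simpa [ENNReal.toReal_ofReal, hp.1 s, hq.1 s] using congrArg ENNReal.toReal h
  rw [llr, eq_div_of_mul_eq hqs rnDeriv_mul]

end Measurable

lemma sq_sub_dotProduct_le_klFin {f : S → ℝ} {a b : ℝ} (hp : p ∈ stdSimplex ℝ S)
    (hq : q ∈ stdSimplex ℝ S) (hab : a < b) (hf : ∀ s, f s ∈ Set.Icc a b) :
    ((2 * ((p - q) ⬝ᵥ f) ^ 2 / (b - a) ^ 2 : ℝ) : EReal) ≤ klFin p q := by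
  let _ : MeasurableSpace S := ⊤
  rw [← klDiv_pmfOfMemStdSimplex hp hq, sub_dotProduct, ← integral_pmfOfMemStdSimplex hp,
    ← integral_pmfOfMemStdSimplex hq]
  exact sq_integral_sub_integral_le_klDiv hab measurable_from_top.aemeasurable (.of_forall hf)

end ProbabilityVector

section DesignMatrix

variable {κ ι : Type*} [Fintype κ] [Fintype ι] {φ : κ → ι → ℝ} {ω : κ → ℝ}

/-- The feature matrix `Λ(ω) = ∑ₖ ω(k) φ(k) φ(k)ᵀ` of an allocation `ω`. -/
def designMatrix (φ : κ → ι → ℝ) (ω : κ → ℝ) : Matrix ι ι ℝ :=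
  ∑ k, ω k • vecMulVec (φ k) (φ k)

lemma designMatrix_mulVec_dotProduct (φ : κ → ι → ℝ) (ω : κ → ℝ) (x y : ι → ℝ) :
    designMatrix φ ω *ᵥ x ⬝ᵥ y = ∑ k, ω k * ((φ k ⬝ᵥ x) * (φ k ⬝ᵥ y)) := by
  rw [designMatrix, sum_mulVec, sum_dotProduct]
  refine Finset.sum_congr rfl fun k _ => ?_
  simp only [smul_mulVec, vecMulVec_mulVec, smul_dotProduct, op_smul_eq_smul, smul_eq_mul]

variable [DecidableEq ι]

lemma dotProduct_eq_sum_of_isUnit_designMatrix (hΛ : IsUnit (designMatrix φ ω)) (v x : ι → ℝ) :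
    v ⬝ᵥ x = ∑ k, ω k * ((φ k ⬝ᵥ (designMatrix φ ω)⁻¹ *ᵥ v) * (φ k ⬝ᵥ x)) := by
  rw [← designMatrix_mulVec_dotProduct, mulVec_mulVec,
    mul_nonsing_inv _ ((isUnit_iff_isUnit_det _).1 hΛ), one_mulVec]

lemma dotProduct_designMatrix_inv_mulVec (hΛ : IsUnit (designMatrix φ ω)) (v : ι → ℝ) :
    v ⬝ᵥ (designMatrix φ ω)⁻¹ *ᵥ v = ∑ k, ω k * (φ k ⬝ᵥ (designMatrix φ ω)⁻¹ *ᵥ v) ^ 2 := by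
  simp only [sq, ← dotProduct_eq_sum_of_isUnit_designMatrix hΛ]

lemma dotProduct_designMatrix_inv_mulVec_nonneg (hω : ∀ k, 0 ≤ ω k)
    (hΛ : IsUnit (designMatrix φ ω)) (v : ι → ℝ) : 0 ≤ v ⬝ᵥ (designMatrix φ ω)⁻¹ *ᵥ v := by
  rw [dotProduct_designMatrix_inv_mulVec hΛ]
  exact Finset.sum_nonneg fun k _ => mul_nonneg (hω k) (sq_nonneg _)

lemma sq_dotProduct_le_designMatrix (hω : ∀ k, 0 ≤ ω k) (hΛ : IsUnit (designMatrix φ ω))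
    (v x : ι → ℝ) :
    (v ⬝ᵥ x) ^ 2 ≤ (v ⬝ᵥ (designMatrix φ ω)⁻¹ *ᵥ v) * ∑ k, ω k * (φ k ⬝ᵥ x) ^ 2 := by
  rw [dotProduct_designMatrix_inv_mulVec hΛ, dotProduct_eq_sum_of_isUnit_designMatrix hΛ v x]
  exact Finset.sum_sq_le_sum_mul_sum_of_sq_le_mul _
    (fun k _ => mul_nonneg (hω k) (sq_nonneg _)) (fun k _ => mul_nonneg (hω k) (sq_nonneg _))
    fun k _ => le_of_eq (by ring)

end DesignMatrix

/-- A discounted Markov decision process on states `S` and actions `A`, given by transition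
probabilities and expected rewards. The discount factor is a parameter of `MDP.backup`, since it is
shared by the processes being compared. -/
structure MDP (S A : Type*) [Fintype S] where
  /-- `transition s a s'` is the probability of moving to `s'` when playing `a` in `s`. -/
  transition : S → A → S → ℝ
  reward : S → A → ℝ
  transition_mem_stdSimplex : ∀ s a, transition s a ∈ stdSimplex ℝ S

namespace MDP

variable {S A : Type*} [Fintype S] {γ : ℝ} {M M' : MDP S A} {π : S → A} {U V W : S → ℝ}

/-- The one-step Bellman backup `r(s,a) + γ ∑ p(s,a,s') V(s')`. With `V = V*` this is `Q*`, with
`V = V^π` it is `Q^π`. -/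
def backup (M : MDP S A) (γ : ℝ) (V : S → ℝ) (s : S) (a : A) : ℝ :=
  M.reward s a + γ * (M.transition s a ⬝ᵥ V)

/-- `V` is the value function `V^π` of the policy `π`. -/
def IsPolicyValue (M : MDP S A) (γ : ℝ) (π : S → A) (V : S → ℝ) : Prop :=
  ∀ s, V s = M.backup γ V s (π s)

/-- `V` is the optimal value function `V*`. -/
def IsOptimalValue (M : MDP S A) (γ : ℝ) (V : S → ℝ) : Prop :=
  ∀ s, IsGreatest (Set.range (M.backup γ V s)) (V s)

/-- The probability measures `q s a`, supported on `[0,1]`, are reward distributions of `M`. -/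
structure IsRewardLaw (M : MDP S A) (q : S → A → Measure ℝ) : Prop where
  isProbabilityMeasure : ∀ s a, IsProbabilityMeasure (q s a)
  ae_mem_Icc : ∀ s a, ∀ᵐ x ∂q s a, x ∈ Set.Icc (0 : ℝ) 1
  integral_eq : ∀ s a, ∫ x, x ∂q s a = M.reward s a

/-- `M` is linear with feature map `φ`. The row `μ s'` is the vector `μ(s')` of the transition
probabilities. -/
def IsLinear {ι : Type*} [Fintype ι] (M : MDP S A) (φ : S × A → ι → ℝ) : Prop :=
  ∃ (θ : ι → ℝ) (μ : Matrix S ι ℝ),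
    ∀ s a, M.reward s a = φ (s, a) ⬝ᵥ θ ∧ M.transition s a = μ *ᵥ φ (s, a)

/-- The divergence `KL_{M|M'}(s,a)` of `M`, with reward distributions `q`, from `M'`, with reward
distributions `q'`. -/
noncomputable def divergence (M M' : MDP S A) (q q' : S → A → Measure ℝ) (s : S) (a : A) : EReal :=
  klDiv (q s a) (q' s a) + klFin (M.transition s a) (M'.transition s a)

lemma backup_sub_backup (s : S) (a : A) :
    M.backup γ U s a - M.backup γ W s a = γ * (M.transition s a ⬝ᵥ (U - W)) := by
  rw [backup, backup, dotProduct_sub]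
  ring

lemma backup_sub_backup_le (hγ : 0 ≤ γ) {c : ℝ} (h : ∀ s, U s - W s ≤ c) (s : S) (a : A) :
    M.backup γ U s a - M.backup γ W s a ≤ γ * c := by
  rw [backup_sub_backup]
  exact mul_le_mul_of_nonneg_left
    (dotProduct_le_of_mem_stdSimplex_s16 (M.transition_mem_stdSimplex s a) h) hγ

-- Evaluate the recursion where `U - W` is largest.
lemma sub_le_of_sub_le_add_backup_sub (hγ : γ ∈ Set.Ico (0 : ℝ) 1) {c : ℝ}
    (h : ∀ s, U s - W s ≤ c + (M.backup γ U s (π s) - M.backup γ W s (π s))) (s : S) :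
    U s - W s ≤ c / (1 - γ) := by
  have : Nonempty S := ⟨s⟩
  obtain ⟨m, hm⟩ := Finite.exists_max fun s => U s - W s
  refine (hm s).trans ?_
  rw [le_div_iff₀ (sub_pos.2 hγ.2)]
  linarith [h m, backup_sub_backup_le (M := M) hγ.1 hm m (π m)]

lemma bellman_error_eq (s : S) (a : A) :
    M.backup γ V s a - M'.backup γ V s a =
      M.reward s a - M'.reward s a + γ * ((M.transition s a - M'.transition s a) ⬝ᵥ V) := by
  rw [backup, backup, sub_dotProduct]
  ring

lemma IsPolicyValue.mem_Icc (hγ : γ ∈ Set.Ico (0 : ℝ) 1) (hV : M.IsPolicyValue γ π V)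
    (hr : ∀ s a, M.reward s a ∈ Set.Icc (0 : ℝ) 1) (s : S) : V s ∈ Set.Icc 0 (1 - γ)⁻¹ := by
  have backup_zero (s : S) : M.backup γ 0 s (π s) = M.reward s (π s) := by
    rw [backup, dotProduct_zero, mul_zero, add_zero]
  have lower := sub_le_of_sub_le_add_backup_sub (M := M) (π := π) (U := 0) (W := V) (c := 0) hγ
    (fun u => by simp only [Pi.zero_apply]; linarith [hV u, backup_zero u, (hr u (π u)).1]) s
  have upper := sub_le_of_sub_le_add_backup_sub (M := M) (π := π) (U := V) (W := 0) (c := 1) hγ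
    (fun u => by simp only [Pi.zero_apply]; linarith [hV u, backup_zero u, (hr u (π u)).2]) s
  rw [zero_div, Pi.zero_apply] at lower
  rw [one_div, Pi.zero_apply] at upper
  exact ⟨by linarith, by linarith⟩

lemma IsOptimalValue.isPolicyValue (hV : M.IsOptimalValue γ V)
    (hπ : ∀ s a, M.backup γ V s a ≤ M.backup γ V s (π s)) : M.IsPolicyValue γ π V :=
  fun s => (hV s).unique ⟨Set.mem_range_self (π s), Set.forall_mem_range.2 (hπ s)⟩

lemma IsRewardLaw.reward_mem_Icc {q : S → A → Measure ℝ} (hq : M.IsRewardLaw q) (s : S) (a : A) :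
    M.reward s a ∈ Set.Icc (0 : ℝ) 1 := by
  have := hq.isProbabilityMeasure s a
  rw [← hq.integral_eq]
  exact (convex_Icc 0 1).integral_mem isClosed_Icc (hq.ae_mem_Icc s a)
    (.of_mem_Icc 0 1 aemeasurable_id (hq.ae_mem_Icc s a))

section Perturbation

variable {G : ℝ}

lemma IsPolicyValue.sub_le_of_backup_sub_le (hγ : γ ∈ Set.Ico (0 : ℝ) 1)
    (hV : M.IsPolicyValue γ π V) (hW : M'.IsPolicyValue γ π W)
    (hG : ∀ s a, M.backup γ V s a - M'.backup γ V s a ≤ G) (s : S) : V s - W s ≤ G / (1 - γ) :=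
  sub_le_of_sub_le_add_backup_sub (M := M') (π := π) hγ
    (fun u => by linarith [hV u, hW u, hG u (π u)]) s

lemma IsOptimalValue.sub_le_of_backup_sub_le (hγ : γ ∈ Set.Ico (0 : ℝ) 1)
    (hV : M.IsOptimalValue γ V) (hW : M'.IsOptimalValue γ W)
    (hG : ∀ s a, M'.backup γ V s a - M.backup γ V s a ≤ G) (s : S) :
    W s - V s ≤ G / (1 - γ) := by
  choose greedy hgreedy using fun u => (hW u).1
  refine sub_le_of_sub_le_add_backup_sub (M := M') (π := greedy) hγ (fun u => ?_) s
  linarith [hgreedy u, hG u (greedy u), (hV u).2 (Set.mem_range_self (greedy u))]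

lemma IsOptimalValue.backup_sub_backup_le (hγ : γ ∈ Set.Ico (0 : ℝ) 1)
    (hV : M.IsOptimalValue γ V) (hW : M'.IsOptimalValue γ W)
    (hG : ∀ s a, M'.backup γ V s a - M.backup γ V s a ≤ G) (s : S) (a : A) :
    M'.backup γ W s a - M.backup γ V s a ≤ G / (1 - γ) := by
  have hcontract := MDP.backup_sub_backup_le (M := M') hγ.1
    (hV.sub_le_of_backup_sub_le hγ hW hG) s a
  have geometric : γ * (G / (1 - γ)) + G = G / (1 - γ) := by
    field_simp [(sub_pos.2 hγ.2).ne']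
    ring
  linarith [hG s a]

lemma IsOptimalValue.exists_greedy_ne {ε : ℝ} (hγ : γ ∈ Set.Ico (0 : ℝ) 1) (hε : 0 ≤ ε)
    (hV : M.IsOptimalValue γ V) (hW : M.IsPolicyValue γ π W) (hnot : ¬ ∀ s, V s - ε ≤ W s) :
    ∃ s, ∃ a ≠ π s, V s = M.backup γ V s a ∧ ε < V s - W s := by
  obtain ⟨s₀, hs₀⟩ := not_forall.1 hnot
  have : Nonempty S := ⟨s₀⟩
  obtain ⟨s, hs⟩ := Finite.exists_max fun s => V s - W s
  have hgap : ε < V s - W s := by linarith [hs s₀, not_le.1 hs₀]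
  obtain ⟨a, ha⟩ := (hV s).1
  refine ⟨s, a, ?_, ha.symm, hgap⟩
  rintro rfl
  have hcontract : V s - W s ≤ γ * (V s - W s) := by
    linarith [hW s, MDP.backup_sub_backup_le (M := M) hγ.1 hs s (π s)]
  linarith [mul_pos (sub_pos.2 hγ.2) (hε.trans_lt hgap)]

lemma gap_add_le_of_abs_backup_sub_le {ε Δ : ℝ} (hγ : γ ∈ Set.Ico (0 : ℝ) 1) (hε : 0 ≤ ε)
    (hV : M.IsOptimalValue γ V) (hπ : M.IsPolicyValue γ π V)
    (hΔ : ∀ s, ∀ a ≠ π s, Δ ≤ V s - M.backup γ V s a)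
    (hU : M'.IsOptimalValue γ U) (hW : M'.IsPolicyValue γ π W) (hnot : ¬ ∀ s, U s - ε ≤ W s)
    (hG : ∀ s a, |M.backup γ V s a - M'.backup γ V s a| ≤ G) :
    (1 - γ) * (Δ + ε) ≤ 2 * G := by
  obtain ⟨s, a, hne, ha, hgap⟩ := hU.exists_greedy_ne hγ hε hW hnot
  have hvalue := hπ.sub_le_of_backup_sub_le hγ hW (fun s a => (abs_le.1 (hG s a)).2) s
  have haction := hV.backup_sub_backup_le hγ hU
    (fun s a => by linarith only [(abs_le.1 (hG s a)).1]) s a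
  have hsum : Δ + ε ≤ 2 * G / (1 - γ) := by
    rw [two_mul, add_div]
    linarith [hΔ s a hne]
  rwa [mul_comm, ← le_div_iff₀ (sub_pos.2 hγ.2)]

end Perturbation

lemma IsLinear.of_apply {ι : Type*} [Fintype ι] {φ : S × A → ι → ℝ} {θ : ι → ℝ} {μ : S → ι → ℝ}
    (hr : ∀ s a, M.reward s a = φ (s, a) ⬝ᵥ θ)
    (hp : ∀ s a s', M.transition s a s' = φ (s, a) ⬝ᵥ μ s') : M.IsLinear φ :=
  ⟨θ, of μ, fun s a =>
    ⟨hr s a, funext fun s' => (hp s a s').trans (dotProduct_comm _ _)⟩⟩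

lemma IsLinear.exists_backup_eq {ι : Type*} [Fintype ι] {φ : S × A → ι → ℝ} (hM : M.IsLinear φ)
    (γ : ℝ) (V : S → ℝ) : ∃ x : ι → ℝ, ∀ s a, M.backup γ V s a = φ (s, a) ⬝ᵥ x := by
  obtain ⟨θ, μ, h⟩ := hM
  refine ⟨θ + γ • (V ᵥ* μ), fun s a => ?_⟩
  rw [backup, (h s a).1, (h s a).2, dotProduct_comm _ V, dotProduct_mulVec, dotProduct_add,
    dotProduct_smul, smul_eq_mul, dotProduct_comm (V ᵥ* μ)]

-- Jensen's inequality for the square, with weights `1 - γ` and `γ`.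
lemma one_sub_sq_mul_sq_add_le (hγ : γ ∈ Set.Icc (0 : ℝ) 1) (x y : ℝ) :
    (1 - γ) ^ 2 * (x + γ * y) ^ 2 ≤ x ^ 2 + ((1 - γ) * y) ^ 2 := by
  have hγ' : 0 ≤ 1 - γ := sub_nonneg.2 hγ.2
  have jensen := (even_two.convexOn_pow (𝕜 := ℝ)).2 (Set.mem_univ x) (Set.mem_univ ((1 - γ) * y))
    hγ' hγ.1 (sub_add_cancel 1 γ)
  calc (1 - γ) ^ 2 * (x + γ * y) ^ 2 = ((1 - γ) * x + γ * ((1 - γ) * y)) ^ 2 := by ring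
    _ ≤ (1 - γ) * x ^ 2 + γ * ((1 - γ) * y) ^ 2 := jensen
    _ ≤ 1 * x ^ 2 + 1 * ((1 - γ) * y) ^ 2 := by
      gcongr
      · linarith [hγ.1]
      · exact hγ.2
    _ = x ^ 2 + ((1 - γ) * y) ^ 2 := by ring

lemma sq_backup_sub_le_divergence {q q' : S → A → Measure ℝ} (hγ : γ ∈ Set.Ico (0 : ℝ) 1)
    (hq : M.IsRewardLaw q) (hq' : M'.IsRewardLaw q') (hV : ∀ s, V s ∈ Set.Icc 0 (1 - γ)⁻¹)
    (s : S) (a : A) :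
    ((2 * (1 - γ) ^ 2 * (M.backup γ V s a - M'.backup γ V s a) ^ 2 : ℝ) : EReal) ≤
      M.divergence M' q q' s a := by
  have hγ' : 0 < 1 - γ := sub_pos.2 hγ.2
  have := hq.isProbabilityMeasure s a
  have := hq'.isProbabilityMeasure s a
  have hreward := sq_integral_sub_integral_le_klDiv (α := q s a) zero_lt_one aemeasurable_id
    (hq'.ae_mem_Icc s a)
  have htransition := sq_sub_dotProduct_le_klFin (M.transition_mem_stdSimplex s a)
    (M'.transition_mem_stdSimplex s a) (inv_pos.2 hγ') hV
  simp only [id, hq.integral_eq, hq'.integral_eq, sub_zero, one_pow, div_one] at hreward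
  rw [sub_zero, inv_pow, div_inv_eq_mul] at htransition
  refine le_trans ?_ (add_le_add hreward htransition)
  rw [bellman_error_eq, ← EReal.coe_add, EReal.coe_le_coe_iff]
  linarith [one_sub_sq_mul_sq_add_le (Set.Ico_subset_Icc_self hγ) (M.reward s a - M'.reward s a)
    ((M.transition s a - M'.transition s a) ⬝ᵥ V)]

section Allocation

variable [Fintype A] {q q' : S → A → Measure ℝ} {ω : S × A → ℝ}

lemma sum_mul_sq_backup_sub_le_sum_divergence (hγ : γ ∈ Set.Ico (0 : ℝ) 1) (hω : ∀ k, 0 ≤ ω k)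
    (hq : M.IsRewardLaw q) (hq' : M'.IsRewardLaw q') (hV : ∀ s, V s ∈ Set.Icc 0 (1 - γ)⁻¹) :
    ((2 * (1 - γ) ^ 2 *
        ∑ k : S × A, ω k * (M.backup γ V k.1 k.2 - M'.backup γ V k.1 k.2) ^ 2 : ℝ) : EReal) ≤
      ∑ k : S × A, (ω k : EReal) * M.divergence M' q q' k.1 k.2 := by
  rw [Finset.mul_sum, ereal_coe_sum]
  refine Finset.sum_le_sum fun k _ => ?_
  rw [mul_left_comm, EReal.coe_mul]
  exact mul_le_mul_of_nonneg_left (sq_backup_sub_le_divergence hγ hq hq' hV k.1 k.2)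
    (EReal.coe_nonneg.2 (hω k))

lemma IsLinear.sq_backup_sub_le_sum {ι : Type*} [Fintype ι] [DecidableEq ι]
    {φ : S × A → ι → ℝ} {σ : ℝ} (hM : M.IsLinear φ) (hM' : M'.IsLinear φ) (hω : ∀ k, 0 ≤ ω k)
    (hΛ : IsUnit (designMatrix φ ω)) (hσ : ∀ k, φ k ⬝ᵥ (designMatrix φ ω)⁻¹ *ᵥ φ k ≤ σ)
    (s : S) (a : A) :
    (M.backup γ V s a - M'.backup γ V s a) ^ 2 ≤
      σ * ∑ k : S × A, ω k * (M.backup γ V k.1 k.2 - M'.backup γ V k.1 k.2) ^ 2 := by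
  obtain ⟨x, hx⟩ := hM.exists_backup_eq γ V
  obtain ⟨x', hx'⟩ := hM'.exists_backup_eq γ V
  simp only [hx, hx', ← dotProduct_sub]
  exact (sq_dotProduct_le_designMatrix hω hΛ (φ (s, a)) (x - x')).trans
    (mul_le_mul_of_nonneg_right (hσ (s, a))
      (Finset.sum_nonneg fun k _ => mul_nonneg (hω k) (sq_nonneg _)))

lemma sq_gap_add_le {ι : Type*} [Fintype ι] [DecidableEq ι] {φ : S × A → ι → ℝ} {ε Δ σ : ℝ}
    (hγ : γ ∈ Set.Ico (0 : ℝ) 1) (hε : 0 ≤ ε) (hΔ₀ : 0 ≤ Δ)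
    (hM : M.IsLinear φ) (hM' : M'.IsLinear φ)
    (hV : M.IsOptimalValue γ V) (hπ : M.IsPolicyValue γ π V)
    (hΔ : ∀ s, ∀ a ≠ π s, Δ ≤ V s - M.backup γ V s a)
    (hU : M'.IsOptimalValue γ U) (hW : M'.IsPolicyValue γ π W) (hnot : ¬ ∀ s, U s - ε ≤ W s)
    (hω : ∀ k, 0 ≤ ω k) (hΛ : IsUnit (designMatrix φ ω))
    (hσ : ∀ k, φ k ⬝ᵥ (designMatrix φ ω)⁻¹ *ᵥ φ k ≤ σ) :
    (1 - γ) ^ 2 * (Δ + ε) ^ 2 ≤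
      4 * (σ * ∑ k : S × A, ω k * (M.backup γ V k.1 k.2 - M'.backup γ V k.1 k.2) ^ 2) := by
  obtain ⟨s₀, -⟩ := not_forall.1 hnot
  have : Nonempty (S × A) := ⟨s₀, π s₀⟩
  obtain ⟨m, hm⟩ := Finite.exists_max fun k : S × A =>
    |M.backup γ V k.1 k.2 - M'.backup γ V k.1 k.2|
  have hgap := gap_add_le_of_abs_backup_sub_le hγ hε hV hπ hΔ hU hW hnot fun s a => hm (s, a)
  have hγ' : 0 ≤ 1 - γ := sub_nonneg.2 hγ.2.le
  calc (1 - γ) ^ 2 * (Δ + ε) ^ 2 = ((1 - γ) * (Δ + ε)) ^ 2 := by ring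
    _ ≤ (2 * |M.backup γ V m.1 m.2 - M'.backup γ V m.1 m.2|) ^ 2 := by gcongr
    _ = 4 * (M.backup γ V m.1 m.2 - M'.backup γ V m.1 m.2) ^ 2 := by
      rw [mul_pow, sq_abs]
      norm_num
    _ ≤ 4 * (σ * ∑ k : S × A, ω k * (M.backup γ V k.1 k.2 - M'.backup γ V k.1 k.2) ^ 2) := by
      gcongr
      exact hM.sq_backup_sub_le_sum hM' hω hΛ hσ m.1 m.2

end Allocation

end MDP

theorem stmt_16_general {S A ι : Type*} [Fintype S] [Fintype A] [Fintype ι] [DecidableEq ι]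
    {φ : S × A → ι → ℝ} {γ ε Δ σ : ℝ} (hγ : γ ∈ Set.Ico (0 : ℝ) 1) (hε : 0 ≤ ε) (hΔ₀ : 0 ≤ Δ)
    {M M' : MDP S A} {q q' : S → A → Measure ℝ} (hq : M.IsRewardLaw q) (hq' : M'.IsRewardLaw q')
    (hM : M.IsLinear φ) (hM' : M'.IsLinear φ) {π : S → A} {V U W : S → ℝ}
    (hV : M.IsOptimalValue γ V) (hπ : M.IsPolicyValue γ π V)
    (hΔ : ∀ s, ∀ a ≠ π s, Δ ≤ V s - M.backup γ V s a)
    (hU : M'.IsOptimalValue γ U) (hW : M'.IsPolicyValue γ π W) (hnot : ¬ ∀ s, U s - ε ≤ W s)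
    {ω : S × A → ℝ} (hω : ∀ k, 0 ≤ ω k) (hΛ : IsUnit (designMatrix φ ω))
    (hσ : ∀ k, φ k ⬝ᵥ (designMatrix φ ω)⁻¹ *ᵥ φ k ≤ σ) :
    (((1 - γ) ^ 4 * (Δ + ε) ^ 2 / (2 * σ) : ℝ) : EReal) ≤
      ∑ k : S × A, (ω k : EReal) * M.divergence M' q q' k.1 k.2 := by
  refine le_trans (EReal.coe_le_coe_iff.2 ?_) (MDP.sum_mul_sq_backup_sub_le_sum_divergence hγ hω
    hq hq' (hπ.mem_Icc hγ hq.reward_mem_Icc))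
  have hsq := MDP.sq_gap_add_le hγ hε hΔ₀ hM hM' hV hπ hΔ hU hW hnot hω hΛ hσ
  set E := ∑ k : S × A, ω k * (M.backup γ V k.1 k.2 - M'.backup γ V k.1 k.2) ^ 2
  have hE : 0 ≤ E := Finset.sum_nonneg fun k _ => mul_nonneg (hω k) (sq_nonneg _)
  obtain ⟨s₀, -⟩ := not_forall.1 hnot
  have hσ₀ : 0 ≤ σ :=
    (dotProduct_designMatrix_inv_mulVec_nonneg hω hΛ (φ (s₀, π s₀))).trans (hσ (s₀, π s₀))
  refine div_le_of_le_mul₀ (by positivity) (by positivity) ?_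
  calc (1 - γ) ^ 4 * (Δ + ε) ^ 2 = (1 - γ) ^ 2 * ((1 - γ) ^ 2 * (Δ + ε) ^ 2) := by ring
    _ ≤ (1 - γ) ^ 2 * (4 * (σ * E)) := by gcongr
    _ = 2 * (1 - γ) ^ 2 * E * (2 * σ) := by ring

theorem stmt_16 {S A : Type*} [Fintype S] [Fintype A] [Nonempty S] [Nonempty A]
    [DecidableEq A]
    {d : ℕ} (φ : S → A → Fin d → ℝ) (γ : ℝ) (hγ : γ ∈ Set.Ioo (0 : ℝ) 1)
    (ε : ℝ) (hε : 0 < ε)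
    -- the MDP M : linear, reward distributions supported on [0,1]
    (p : S → A → S → ℝ) (r : S → A → ℝ)
    (hp0 : ∀ s a s', 0 ≤ p s a s') (hp1 : ∀ s a, ∑ s', p s a s' = 1)
    (θ : Fin d → ℝ) (μ : S → Fin d → ℝ)
    (hr : ∀ s a, r s a = φ s a ⬝ᵥ θ) (hP : ∀ s a s', p s a s' = φ s a ⬝ᵥ μ s')
    (q : S → A → Measure ℝ) (hq : ∀ s a, IsProbabilityMeasure (q s a))
    (hqsupp : ∀ s a, q s a (Set.Icc (0 : ℝ) 1)ᶜ = 0)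
    (hqmean : ∀ s a, (∫ x, x ∂q s a) = r s a)
    -- optimal value functions of M and its unique optimal policy
    (Vstar : S → ℝ) (Qstar : S → A → ℝ)
    (hQstar : ∀ s a, Qstar s a = r s a + γ * ∑ s', p s a s' * Vstar s')
    (hVstar : ∀ s, Vstar s = univ.sup' univ_nonempty fun a => Qstar s a)
    (πstar : S → A)
    (hπ : ∀ s a, a ≠ πstar s → Qstar s a < Qstar s (πstar s))
    -- the suboptimality gap of M
    (T : Finset (S × A)) (hTdef : T = univ.filter fun sa : S × A => sa.2 ≠ πstar sa.1)
    (hT : T.Nonempty)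
    -- the allocation ω, its feature matrix and σ(ω)
    (ω : S × A → ℝ) (hω0 : ∀ sa, 0 ≤ ω sa) (hω1 : ∑ sa, ω sa = 1)
    (Λω : Matrix (Fin d) (Fin d) ℝ)
    (hΛω : Λω = ∑ sa : S × A, ω sa • vecMulVec (φ sa.1 sa.2) (φ sa.1 sa.2))
    (hinv : IsUnit Λω)
    (σω : ℝ)
    (hσω : σω = univ.sup' univ_nonempty
      fun sa : S × A => φ sa.1 sa.2 ⬝ᵥ Λω⁻¹.mulVec (φ sa.1 sa.2)) :
    -- for every alternative linear MDP M' for which πstar is not ε-optimal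
    ∀ (p' : S → A → S → ℝ) (r' : S → A → ℝ),
      (∀ s a s', 0 ≤ p' s a s') → (∀ s a, ∑ s', p' s a s' = 1) →
      ∀ (θ' : Fin d → ℝ) (μ' : S → Fin d → ℝ),
      (∀ s a, r' s a = φ s a ⬝ᵥ θ') → (∀ s a s', p' s a s' = φ s a ⬝ᵥ μ' s') →
      ∀ q' : S → A → Measure ℝ,
      (∀ s a, IsProbabilityMeasure (q' s a)) →
      (∀ s a, q' s a (Set.Icc (0 : ℝ) 1)ᶜ = 0) →
      (∀ s a, (∫ x, x ∂q' s a) = r' s a) →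
      ∀ (V'star : S → ℝ) (Q'star : S → A → ℝ),
      (∀ s a, Q'star s a = r' s a + γ * ∑ s', p' s a s' * V'star s') →
      (∀ s, V'star s = univ.sup' univ_nonempty fun a => Q'star s a) →
      ∀ (Vpi' : S → ℝ) (Qpi' : S → A → ℝ),
      (∀ s a, Qpi' s a = r' s a + γ * ∑ s', p' s a s' * Vpi' s') →
      (∀ s, Vpi' s = Qpi' s (πstar s)) →
      (¬ ∀ s, V'star s - ε ≤ Vpi' s) →
      (((3 * (1 - γ) ^ 4 *
          (T.inf' hT (fun sa => Vstar sa.1 - Qstar sa.1 sa.2) + ε) ^ 2 /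
          (10 * σω) : ℝ) : EReal) ≤
        ∑ sa : S × A, ((ω sa : ℝ) : EReal) *
          (klDiv (q sa.1 sa.2) (q' sa.1 sa.2) +
            klFin (p sa.1 sa.2) (p' sa.1 sa.2))) := by
  intro p' r' hp'0 hp'1 θ' μ' hr' hP' q' hq' hq'supp hq'mean V'star Q'star hQ'star hV'star
    Vpi' Qpi' hQpi' hVpi' hnot
  let M : MDP S A := ⟨p, r, fun s a => ⟨hp0 s a, hp1 s a⟩⟩
  let M' : MDP S A := ⟨p', r', fun s a => ⟨hp'0 s a, hp'1 s a⟩⟩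
  obtain rfl : Qstar = M.backup γ Vstar := funext₂ hQstar
  obtain rfl : Q'star = M'.backup γ V'star := funext₂ hQ'star
  obtain rfl : Qpi' = M'.backup γ Vpi' := funext₂ hQpi'
  subst hΛω
  have hV : M.IsOptimalValue γ Vstar := fun s => isGreatest_range_of_eq_sup' (hVstar s)
  have hV' : M'.IsOptimalValue γ V'star := fun s => isGreatest_range_of_eq_sup' (hV'star s)
  have hVπ : M.IsPolicyValue γ πstar Vstar := hV.isPolicyValue fun s a =>
    (eq_or_ne a (πstar s)).elim (fun h => h ▸ le_rfl) fun h => (hπ s a h).le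
  have hΔ : ∀ s, ∀ a ≠ πstar s, T.inf' hT _ ≤ Vstar s - M.backup γ Vstar s a := fun s a ha =>
    inf'_le (fun k : S × A => Vstar k.1 - M.backup γ Vstar k.1 k.2) (b := (s, a))
      (hTdef ▸ mem_filter.2 ⟨mem_univ _, ha⟩)
  have hσ := Set.forall_mem_range.1 (isGreatest_range_of_eq_sup' hσω).2
  refine le_trans (EReal.coe_le_coe_iff.2 ?_) (stmt_16_general (M := M) (M' := M')
    (φ := fun k => φ k.1 k.2) (Set.Ioo_subset_Ico_self hγ) hε.le
    (le_inf' _ _ fun k _ => sub_nonneg.2 ((hV k.1).2 ⟨k.2, rfl⟩))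
    ⟨hq, hqsupp, hqmean⟩ ⟨hq', hq'supp, hq'mean⟩ (.of_apply hr hP) (.of_apply hr' hP')
    hV hVπ hΔ hV' hVpi' hnot hω0 hinv hσ)
  have hσ₀ : 0 ≤ σω := (dotProduct_designMatrix_inv_mulVec_nonneg hω0 hinv _).trans
    (hσ (Classical.arbitrary _))
  rw [mul_assoc]
  exact three_mul_div_ten_mul_le (by positivity) hσ₀
end
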